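/- Let r ≥ 2 and n ≥ 2. Any collection H of n pairwise disjoint r-element subsets of ℤ contains a sub-collection of size ⌊n^{1/(2^r−1)}/2⌋ in which every pair of sets realizes the same r-pattern. -/

import Mathlib

/-- A block `A^k B^k` (if `b = true`) or `B^k A^k` (if `b = false`), where `true` encodes
the letter A and `false` encodes the letter B. -/
def pblock (k : ℕ) (b : Bool) : List Bool :=
  if b then List.replicate k true ++ List.replicate k false
  else List.replicate k false ++ List.replicate k true

/-- An `r`-pattern: a string in `{A,B}^{2r}` starting with A, with `r` A's and `r` B's.
Here `true` encodes A and `false` encodes B. -/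
def IsPattern (r : ℕ) (P : List Bool) : Prop :=
  P.length = 2 * r ∧ P.count true = r ∧ P.head? = some true

/-- The pattern determined by the pair of disjoint finite sets `(e, f)`: list the elements of
`e ∪ f` in increasing order and record membership in `e` (A = `true`) vs `f` (B = `false`). -/
def patternOfPair (e f : Finset ℤ) : List Bool :=
  ((e ∪ f).sort (· ≤ ·)).map (fun x => decide (x ∈ e))

/-- The unordered pair `{e, f}` realizes the pattern `P`. -/
def Realizes (P : List Bool) (e f : Finset ℤ) : Prop :=
  patternOfPair e f = P ∨ patternOfPair f e = P

/-- A collection `S` is a `P`-clique if every pair of distinct members realizes the pattern `P`. -/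
def IsPClique (P : List Bool) (S : Finset (Finset ℤ)) : Prop :=
  ∀ e ∈ S, ∀ f ∈ S, e ≠ f → Realizes P e f

/-!
View the sets as increasing `(k + 1)`-tuples, `k = r - 1`, and suppose every clique has at most `m`
members. Maintain a set `T` of cuts at which the tuples are separated: all entries before the cut
lie below all entries after it, for any two tuples. Entries in different blocks then compare in a
fixed way, and a pair of tuples can only be complicated by the start of a block of `f` splitting
the corresponding block of `e`.

If few pairs split, a greedy choice gives a large subfamily without splits. There a pair is
determined by how the block starts compare, so any two members are related by one of `2 ^ #T` strict
orders whose chains are cliques; mapping a tuple to its ranks in all these orders shows that the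
subfamily has at most `m ^ 2 ^ #T` members. If instead one tuple splits many others at the same gap,
those are separated at that gap too, and the argument recurses with one more cut. The losses
multiply to `n ≤ 2 ^ k * k ! * m ^ (2 ^ (k + 1) - 1)`.
-/

open Finset
open scoped Nat

section Relations

variable {α : Type*} {R : α → α → Prop}

open scoped Classical in
/- Greedy choice: pick a vertex of low degree and discard it together with its neighbours. -/
theorem exists_isAntichain_of_degenerate {d : ℕ} (F : Finset α)
    (h : ∀ G ⊆ F, G.Nonempty → ∃ f ∈ G, #{e ∈ G | e = f ∨ R e f ∨ R f e} ≤ d) :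
    ∃ I ⊆ F, IsAntichain R (I : Set α) ∧ #F ≤ d * #I := by
  induction F using Finset.strongInduction with
  | H F ih =>
  rcases F.eq_empty_or_nonempty with rfl | hF
  · exact ⟨∅, by simp⟩
  obtain ⟨f, hf, hd⟩ := h F subset_rfl hF
  set N := {e ∈ F | e = f ∨ R e f ∨ R f e} with hN
  have hfN : f ∈ N := by simp [hN, hf]
  have hNF : N ⊆ F := filter_subset _ _
  obtain ⟨I, hI, hanti, hcard⟩ := ih (F \ N) (sdiff_ssubset hNF ⟨f, hfN⟩)
    fun G hG => h G (hG.trans sdiff_subset)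
  have hfar : ∀ e ∈ I, e ≠ f ∧ ¬ R e f ∧ ¬ R f e := fun e he => by
    have := mem_sdiff.1 (hI he)
    simp_all
  refine ⟨insert f I, insert_subset hf (hI.trans sdiff_subset), ?_, ?_⟩
  · rw [coe_insert, isAntichain_insert]
    exact ⟨hanti, fun e he _ => ⟨(hfar e he).2.2, (hfar e he).2.1⟩⟩
  · calc #F = #(F \ N) + #N := (card_sdiff_add_card_eq_card hNF).symm
      _ ≤ d * #I + d := Nat.add_le_add hcard hd
      _ = d * #(insert f I) := by
        rw [card_insert_of_notMem fun hfI => (hfar f hfI).1 rfl, mul_add_one]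

open scoped Classical in
/- Strictness pays for the vertex itself, giving degeneracy `2 * d` rather than `2 * d + 1`. -/
theorem exists_isAntichain_of_sum_card_lt {d : ℕ} (F : Finset α)
    (h : ∀ G ⊆ F, G.Nonempty → ∑ f ∈ G, #{e ∈ G | R e f} < d * #G) :
    ∃ I ⊆ F, IsAntichain R (I : Set α) ∧ #F ≤ 2 * d * #I := by
  refine exists_isAntichain_of_degenerate F fun G hGF hG => ?_
  have hswap : ∑ f ∈ G, #{e ∈ G | R f e} = ∑ f ∈ G, #{e ∈ G | R e f} :=
    sum_card_bipartiteAbove_eq_sum_card_bipartiteBelow R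
  have hlt : ∑ f ∈ G, (#{e ∈ G | R e f} + #{e ∈ G | R f e}) < ∑ _f ∈ G, 2 * d := by
    rw [sum_add_distrib, hswap, sum_const, smul_eq_mul]
    linarith [h G hGF hG]
  obtain ⟨f, hf, hdeg⟩ := exists_lt_of_sum_lt hlt
  refine ⟨f, hf, ?_⟩
  calc #{e ∈ G | e = f ∨ R e f ∨ R f e}
      ≤ #{e ∈ G | e = f} + (#{e ∈ G | R e f} + #{e ∈ G | R f e}) := by
        rw [filter_or, filter_or]
        grw [card_union_le, card_union_le]
    _ ≤ 1 + (#{e ∈ G | R e f} + #{e ∈ G | R f e}) := by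
        gcongr
        exact card_le_one.2 (by simp +contextual)
    _ ≤ 2 * d := by lia

theorem exists_rank_lt_of_isChain_card_le [IsStrictOrder α R] {m : ℕ} (I : Finset α)
    (hm : ∀ S ⊆ I, IsChain R (S : Set α) → #S ≤ m) :
    ∃ rank : α → ℕ, (∀ e ∈ I, rank e < m) ∧ ∀ e ∈ I, ∀ f, R e f → rank e < rank f := by
  classical
  have exists_longest (e : α) : ∃ S ⊆ I, (IsChain R (S : Set α) ∧ ∀ x ∈ S, R x e) ∧
      ∀ S' ⊆ I, IsChain R (S' : Set α) → (∀ x ∈ S', R x e) → #S' ≤ #S := by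
    obtain ⟨S, hS, hmax⟩ := exists_max_image
      {S ∈ I.powerset | IsChain R (SetLike.coe S) ∧ ∀ x ∈ S, R x e} card ⟨∅, by simp⟩
    simp only [mem_filter, mem_powerset] at hS hmax
    exact ⟨S, hS.1, hS.2, fun S' hI hchain hlt => hmax S' ⟨hI, hchain, hlt⟩⟩
  choose longest hsub hlongest hmax using exists_longest
  have hcard (e : α) : #(insert e (longest e)) = #(longest e) + 1 :=
    card_insert_of_notMem fun he => irrefl e ((hlongest e).2 e he)
  have hchain (e : α) : IsChain R (insert e (longest e) : Set α) :=
    (hlongest e).1.insert fun x hx _ => .inr ((hlongest e).2 x hx)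
  simp only [← coe_insert] at hchain
  refine ⟨fun e => #(longest e), fun e he => ?_, fun e he f hef => ?_⟩
  · have hle := hm _ (insert_subset he (hsub e)) (hchain e)
    rwa [hcard] at hle
  · have hbelow : ∀ x ∈ insert e (longest e), R x f :=
      (forall_mem_insert _ _ _).2 ⟨hef, fun x hx => _root_.trans ((hlongest e).2 x hx) hef⟩
    have hle := hmax f _ (insert_subset he (hsub e)) (hchain e) hbelow
    rwa [hcard] at hle

theorem card_le_pow_of_isChain_card_le {γ : Type*} [Fintype γ] (R : γ → α → α → Prop)
    [∀ c, IsStrictOrder α (R c)] {m : ℕ} (I : Finset α)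
    (hR : ∀ e ∈ I, ∀ f ∈ I, e ≠ f → ∃ c, R c e f ∨ R c f e)
    (hm : ∀ c, ∀ S ⊆ I, IsChain (R c) (S : Set α) → #S ≤ m) :
    #I ≤ m ^ Fintype.card γ := by
  classical
  choose rank hrank_lt hrank using fun c => exists_rank_lt_of_isChain_card_le I (hm c)
  have hmaps : ∀ e ∈ I, (rank · e) ∈ Fintype.piFinset fun _ : γ => range m := fun e he => by
    simpa using fun c => hrank_lt c e he
  have hinj : Set.InjOn (fun e c => rank c e) I := fun e he f hf hef => by
    by_contra hne
    obtain ⟨c, hc | hc⟩ := hR e he f hf hne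
    · exact (hrank c e he f hc).ne (congrFun hef c)
    · exact (hrank c f hf e hc).ne' (congrFun hef c)
  simpa using card_le_card_of_injOn _ hmaps hinj

end Relations

section Blocks

variable {k : ℕ} {T : Finset (Fin k)} {i j : Fin (k + 1)}

/-- Cutting the positions `0, …, k` between `t` and `t + 1` for each `t ∈ T` yields consecutive
blocks; this is the first position of the block containing a given one. -/
def blockStart (T : Finset (Fin k)) : Fin (k + 1) → Fin (k + 1) :=
  Fin.induction 0 fun t b => if t ∈ T then t.succ else b

theorem blockStart_succ (t : Fin k) :
    blockStart T t.succ = if t ∈ T then t.succ else blockStart T t.castSucc :=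
  Fin.induction_succ ..

theorem blockStart_le (T : Finset (Fin k)) (j : Fin (k + 1)) : blockStart T j ≤ j := by
  induction j using Fin.induction with
  | zero => rfl
  | succ t ih =>
    rw [blockStart_succ]
    split_ifs
    · rfl
    · exact ih.trans t.castSucc_le_succ

theorem blockStart_mono (T : Finset (Fin k)) : Monotone (blockStart T) :=
  Fin.monotone_iff_le_succ.2 fun t => by
    rw [blockStart_succ]
    split_ifs
    · exact (blockStart_le T _).trans t.castSucc_le_succ
    · rfl

theorem blockStart_eq_zero_or_exists_succ (T : Finset (Fin k)) (j : Fin (k + 1)) :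
    blockStart T j = 0 ∨ ∃ t ∈ T, blockStart T j = t.succ := by
  induction j using Fin.induction with
  | zero => exact .inl rfl
  | succ t ih =>
    rw [blockStart_succ]
    split_ifs with ht
    · exact .inr ⟨t, ht, rfl⟩
    · exact ih

theorem exists_cut_of_blockStart_lt (hij : blockStart T i < blockStart T j) :
    ∃ t ∈ T, i ≤ t.castSucc ∧ t.succ ≤ j := by
  obtain h0 | ⟨t, ht, hj⟩ := blockStart_eq_zero_or_exists_succ T j
  · exact absurd hij (by simp [h0])
  refine ⟨t, ht, Fin.le_castSucc_iff.2 ?_, hj ▸ blockStart_le T j⟩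
  by_contra! hti
  have := blockStart_mono T hti
  rw [blockStart_succ, if_pos ht, ← hj] at this
  exact this.not_gt hij

end Blocks

section Tuples

variable {α β : Type*} [LinearOrder β] {k : ℕ} {v : α → Fin (k + 1) ↪o β} {T : Finset (Fin k)}
  {F S : Finset α} {e f : α}

/-- The tuples indexed by `S` realize a single order type: of two of them, the one with the
smaller first entry always compares to the other in the same way. -/
def IsHomogeneous (v : α → Fin (k + 1) ↪o β) (S : Finset α) : Prop :=
  ∃ M : Fin (k + 1) → Fin (k + 1) → Prop,
    ∀ e ∈ S, ∀ f ∈ S, v e 0 < v f 0 → ∀ i j, v e i < v f j ↔ M i j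

theorem IsHomogeneous.mono {S' : Finset α} (hS : IsHomogeneous v S) (hS' : S' ⊆ S) :
    IsHomogeneous v S' := by
  obtain ⟨M, hM⟩ := hS
  exact ⟨M, fun e he f hf => hM e (hS' he) f (hS' hf)⟩

theorem isHomogeneous_of_card_le_one (hS : #S ≤ 1) : IsHomogeneous v S :=
  ⟨fun _ _ => True, fun e he f hf h => absurd h (by simp [card_le_one.1 hS e he f hf])⟩

/-- The values of all tuples indexed by `F` at positions up to `t` lie below all their values at
later positions. -/
def SeparatedAt (v : α → Fin (k + 1) ↪o β) (F : Finset α) (t : Fin k) : Prop :=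
  ∀ e ∈ F, ∀ f ∈ F, v e t.castSucc < v f t.succ

theorem SeparatedAt.mono {G : Finset α} {t : Fin k} (hF : SeparatedAt v F t) (hG : G ⊆ F) :
    SeparatedAt v G t :=
  fun e he f hf => hF e (hG he) f (hG hf)

/-- The block of `f` containing position `t` starts inside the gap of `e` between positions `t`
and `t + 1`. -/
def SplitAt (v : α → Fin (k + 1) ↪o β) (T : Finset (Fin k)) (t : Fin k) (e f : α) : Prop :=
  v f (blockStart T t.castSucc) ∈ Set.Ioc (v e t.castSucc) (v e t.succ)

/-- Some block of `e` is split by the start of the corresponding block of `f`. When neither of `e`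
and `f` splits the other, corresponding blocks do not interlace. -/
def Split (v : α → Fin (k + 1) ↪o β) (T : Finset (Fin k)) (e f : α) : Prop :=
  ∃ t ∈ Tᶜ, SplitAt v T t e f

theorem lt_blockStart_of_not_split (hef : ¬ Split v T e f) {j : Fin (k + 1)}
    (hj : v e (blockStart T j) < v f (blockStart T j)) : v e j < v f (blockStart T j) := by
  induction j using Fin.induction with
  | zero => exact hj
  | succ t ih =>
    rw [blockStart_succ] at hj ⊢
    split_ifs at hj ⊢ with ht
    · exact hj
    · by_contra! hle
      exact hef ⟨t, mem_compl.2 ht, ih hj, hle⟩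

theorem lt_of_blockStart_lt (hsep : ∀ t ∈ T, SeparatedAt v F t) (he : e ∈ F) (hf : f ∈ F)
    {i j : Fin (k + 1)} (hij : blockStart T i < blockStart T j) : v e i < v f j := by
  obtain ⟨t, ht, hit, htj⟩ := exists_cut_of_blockStart_lt hij
  calc v e i ≤ v e t.castSucc := (v e).monotone hit
    _ < v f t.succ := hsep t ht e he f hf
    _ ≤ v f j := (v f).monotone htj

theorem lt_iff_of_not_split (hsep : ∀ t ∈ T, SeparatedAt v F t) (he : e ∈ F) (hf : f ∈ F)
    (hne : ∀ i, v e i ≠ v f i) (hef : ¬ Split v T e f) (hfe : ¬ Split v T f e)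
    (i j : Fin (k + 1)) :
    v e i < v f j ↔ blockStart T i < blockStart T j ∨
      blockStart T i = blockStart T j ∧ v e (blockStart T i) < v f (blockStart T i) := by
  obtain hlt | heq | hgt := lt_trichotomy (blockStart T i) (blockStart T j)
  · simp [hlt, lt_of_blockStart_lt hsep he hf hlt]
  · simp only [heq, lt_irrefl, true_and, false_or]
    refine ⟨fun hij => ?_, fun hb => ?_⟩
    · by_contra! hle
      have hji : v f j < v e i :=
        calc v f j < v e (blockStart T j) :=
              lt_blockStart_of_not_split hfe (hle.lt_of_ne (hne _).symm)
          _ ≤ v e i := (v e).monotone (heq ▸ blockStart_le T i)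
      exact hji.not_gt hij
    · calc v e i < v f (blockStart T i) := lt_blockStart_of_not_split hef (by rwa [heq])
        _ ≤ v f j := (v f).monotone (heq ▸ blockStart_le T j)
  · simp [hgt.not_gt, hgt.ne', (lt_of_blockStart_lt hsep hf he hgt).not_gt]

/-- The strict order on tuples that compares first entries upwards, and entries at the start of
any other block upwards or downwards according to whether the cut before that block is in `σ`. -/
def SignedLT (v : α → Fin (k + 1) ↪o β) (T σ : Finset (Fin k)) (e f : α) : Prop :=
  v e 0 < v f 0 ∧ ∀ t ∈ T, v e t.succ < v f t.succ ↔ t ∈ σ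

instance SignedLT.isStrictOrder (σ : Finset (Fin k)) : IsStrictOrder α (SignedLT v T σ) where
  irrefl _ h := lt_irrefl _ h.1
  trans e f g hef hfg := by
    refine ⟨hef.1.trans hfg.1, fun t ht => ⟨fun h => ?_, fun h => ?_⟩⟩
    · by_contra hσ
      have hfe : v f t.succ ≤ v e t.succ := not_lt.1 ((hef.2 t ht).not.2 hσ)
      have hgf : v g t.succ ≤ v f t.succ := not_lt.1 ((hfg.2 t ht).not.2 hσ)
      exact (hgf.trans hfe).not_gt h
    · exact ((hef.2 t ht).2 h).trans ((hfg.2 t ht).2 h)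

theorem exists_signedLT (T : Finset (Fin k)) (h : v e 0 < v f 0) :
    ∃ σ ∈ T.powerset, SignedLT v T σ e f :=
  ⟨{t ∈ T | v e t.succ < v f t.succ}, by simp, h, by simp +contextual⟩

theorem SignedLT.lt_blockStart_iff {σ : Finset (Fin k)} (h : SignedLT v T σ e f)
    (j : Fin (k + 1)) :
    v e (blockStart T j) < v f (blockStart T j) ↔ ∀ t : Fin k, blockStart T j = t.succ → t ∈ σ := by
  obtain h0 | ⟨t, ht, hj⟩ := blockStart_eq_zero_or_exists_succ T j
  · simp [h0, h.1, (Fin.succ_ne_zero _).symm]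
  · simp [hj, h.2 t ht]

theorem isHomogeneous_of_isChain_signedLT (hv : Pairwise fun e f => ∀ i, v e i ≠ v f i)
    (hsep : ∀ t ∈ T, SeparatedAt v S t) (hanti : IsAntichain (Split v T) (S : Set α))
    {σ : Finset (Fin k)} (hchain : IsChain (SignedLT v T σ) (S : Set α)) :
    IsHomogeneous v S := by
  refine ⟨fun i j => blockStart T i < blockStart T j ∨ blockStart T i = blockStart T j ∧
    ∀ t : Fin k, blockStart T i = t.succ → t ∈ σ, fun e he f hf h0 i j => ?_⟩
  have hne : e ≠ f := by rintro rfl; exact lt_irrefl _ h0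
  have hσ : SignedLT v T σ e f :=
    (hchain he hf hne).resolve_right fun hfe => hfe.1.not_gt h0
  rw [lt_iff_of_not_split hsep he hf (hv hne) (hanti he hf hne) (hanti hf he hne.symm),
    hσ.lt_blockStart_iff]

theorem card_le_of_isAntichain_split {m : ℕ} (hv : Pairwise fun e f => ∀ i, v e i ≠ v f i)
    (hsep : ∀ t ∈ T, SeparatedAt v F t) (hanti : IsAntichain (Split v T) (F : Set α))
    (hm : ∀ S ⊆ F, IsHomogeneous v S → #S ≤ m) : #F ≤ m ^ 2 ^ #T := by
  have hcomp : ∀ e ∈ F, ∀ f ∈ F, e ≠ f →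
      ∃ σ : T.powerset, SignedLT v T σ e f ∨ SignedLT v T σ f e := fun e _ f _ hef => by
    obtain h | h := (hv hef 0).lt_or_gt
    · obtain ⟨σ, hσ, h⟩ := exists_signedLT T h
      exact ⟨⟨σ, hσ⟩, .inl h⟩
    · obtain ⟨σ, hσ, h⟩ := exists_signedLT T h
      exact ⟨⟨σ, hσ⟩, .inr h⟩
  have hchain : ∀ σ : T.powerset, ∀ S ⊆ F, IsChain (SignedLT v T σ) (S : Set α) → #S ≤ m :=
    fun σ S hS hσ => hm S hS <| isHomogeneous_of_isChain_signedLT hv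
      (fun t ht => (hsep t ht).mono hS) (hanti.subset (coe_subset.2 hS)) hσ
  have hle := card_le_pow_of_isChain_card_le (fun σ : T.powerset => SignedLT v T σ) F hcomp hchain
  rwa [Fintype.card_coe, card_powerset] at hle

open scoped Classical in
theorem separatedAt_filter_splitAt (t : Fin k) (f : α) :
    SeparatedAt v {e ∈ F | SplitAt v T t e f} t := fun _ he _ he' =>
  (mem_filter.1 he).2.1.trans_le (mem_filter.1 he').2.2

open scoped Classical in
theorem sum_card_splitAt_lt {t : Fin k} {K : ℕ} (hF : F.Nonempty) (hK₀ : 0 < K)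
    (hK : ∀ f ∈ F, #{e ∈ F | SplitAt v T t e f} ≤ K) :
    ∑ f ∈ F, #{e ∈ F | SplitAt v T t e f} < K * #F := by
  obtain ⟨f, hf, hmin⟩ := exists_min_image F (fun f => v f (blockStart T t.castSucc)) hF
  have hf_empty : {e ∈ F | SplitAt v T t e f} = ∅ := filter_eq_empty_iff.2 fun e he hsplit =>
    hsplit.1.not_ge <| (hmin e he).trans <| (v e).monotone (blockStart_le T _)
  rw [mul_comm, ← smul_eq_mul, ← sum_const]
  exact sum_lt_sum hK ⟨f, hf, by rwa [hf_empty, card_empty]⟩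

open scoped Classical in
theorem sum_card_split_lt {K : ℕ} (hT : Tᶜ.Nonempty) (hF : F.Nonempty) (hK₀ : 0 < K)
    (hK : ∀ t ∈ Tᶜ, ∀ f ∈ F, #{e ∈ F | SplitAt v T t e f} ≤ K) :
    ∑ f ∈ F, #{e ∈ F | Split v T e f} < #Tᶜ * K * #F := by
  have hunion (f : α) :
      #{e ∈ F | Split v T e f} ≤ ∑ t ∈ Tᶜ, #{e ∈ F | SplitAt v T t e f} := by
    refine (card_le_card fun e he => ?_).trans card_biUnion_le
    simpa [Split, and_left_comm] using he
  calc ∑ f ∈ F, #{e ∈ F | Split v T e f}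
      ≤ ∑ f ∈ F, ∑ t ∈ Tᶜ, #{e ∈ F | SplitAt v T t e f} := sum_le_sum fun f _ => hunion f
    _ = ∑ t ∈ Tᶜ, ∑ f ∈ F, #{e ∈ F | SplitAt v T t e f} := sum_comm
    _ < ∑ _t ∈ Tᶜ, K * #F :=
      sum_lt_sum_of_nonempty hT fun t ht => sum_card_splitAt_lt hF hK₀ (hK t ht)
    _ = #Tᶜ * K * #F := by rw [sum_const, smul_eq_mul, mul_assoc]

theorem exists_isAntichain_split {K : ℕ} (hT : Tᶜ.Nonempty) (hsep : ∀ t ∈ T, SeparatedAt v F t)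
    (hK₀ : 0 < K)
    (hK : ∀ t ∉ T, ∀ G ⊆ F, (∀ u ∈ insert t T, SeparatedAt v G u) → #G ≤ K) :
    ∃ I ⊆ F, IsAntichain (Split v T) (I : Set α) ∧ #F ≤ 2 * (#Tᶜ * K) * #I := by
  classical
  refine exists_isAntichain_of_sum_card_lt F fun G hGF hG => sum_card_split_lt hT hG hK₀ ?_
  intro t ht f _
  have hsub : {e ∈ G | SplitAt v T t e f} ⊆ F := (filter_subset _ _).trans hGF
  exact hK t (mem_compl.1 ht) _ hsub <| (forall_mem_insert _ _ _).2
    ⟨separatedAt_filter_splitAt t f, fun u hu => (hsep u hu).mono hsub⟩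

theorem card_le_of_card_le_of_separatedAt_insert {m K : ℕ}
    (hv : Pairwise fun e f => ∀ i, v e i ≠ v f i) (hsep : ∀ t ∈ T, SeparatedAt v F t)
    (hm : ∀ S ⊆ F, IsHomogeneous v S → #S ≤ m) (hT : Tᶜ.Nonempty) (hK₀ : 0 < K)
    (hK : ∀ t ∉ T, ∀ G ⊆ F, (∀ u ∈ insert t T, SeparatedAt v G u) → #G ≤ K) :
    #F ≤ 2 * (#Tᶜ * K) * m ^ 2 ^ #T := by
  obtain ⟨I, hIF, hanti, hI⟩ := exists_isAntichain_split hT hsep hK₀ hK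
  grw [hI, card_le_of_isAntichain_split hv (fun t ht => (hsep t ht).mono hIF) hanti
    fun S hS => hm S (hS.trans hIF)]

theorem card_le_of_forall_separatedAt {m : ℕ} (hv : Pairwise fun e f => ∀ i, v e i ≠ v f i)
    (hsep : ∀ t ∈ T, SeparatedAt v F t) (hm : ∀ S ⊆ F, IsHomogeneous v S → #S ≤ m) :
    #F ≤ 2 ^ #Tᶜ * (#Tᶜ)! * m ^ (2 ^ (k + 1) - 2 ^ #T) := by
  have hcard (T : Finset (Fin k)) : #T + #Tᶜ = k := by simp
  induction hs : #Tᶜ generalizing T F with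
  | zero =>
    have hanti : IsAntichain (Split v T) (F : Set α) := fun _ _ _ _ _ ⟨t, ht, _⟩ => by
      simp [card_eq_zero.1 hs] at ht
    have hexp : 2 ^ (k + 1) = 2 ^ #T + 2 ^ #T := by
      rw [← mul_two, ← pow_succ]
      congr 1
      linarith [hcard T]
    simpa [hexp] using card_le_of_isAntichain_split hv hsep hanti hm
  | succ s ih =>
    obtain rfl | ⟨e, he⟩ := F.eq_empty_or_nonempty
    · simp
    have hm₀ : 0 < m := by
      have hle := hm {e} (singleton_subset_iff.2 he) (isHomogeneous_of_card_le_one (by simp))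
      rwa [card_singleton] at hle
    set K := 2 ^ s * s ! * m ^ (2 ^ (k + 1) - 2 ^ (#T + 1)) with hK_def
    have hK : ∀ t ∉ T, ∀ G ⊆ F, (∀ u ∈ insert t T, SeparatedAt v G u) → #G ≤ K := by
      intro t ht G hG hsepG
      have hcardT : #(insert t T) = #T + 1 := card_insert_of_notMem ht
      rw [hK_def, ← hcardT]
      exact ih hsepG (fun S hS => hm S (hS.trans hG)) (by linarith [hcard T, hcard (insert t T)])
    have hexp : 2 ^ (k + 1) - 2 ^ #T = (2 ^ (k + 1) - 2 ^ (#T + 1)) + 2 ^ #T := by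
      have : 2 ^ (#T + 1) ≤ 2 ^ (k + 1) := Nat.pow_le_pow_right two_pos (by linarith [hcard T])
      lia
    calc #F ≤ 2 * (#Tᶜ * K) * m ^ 2 ^ #T :=
          card_le_of_card_le_of_separatedAt_insert hv hsep hm (card_pos.1 (by lia)) (by positivity)
            hK
      _ = 2 ^ (s + 1) * (s + 1)! * m ^ (2 ^ (k + 1) - 2 ^ #T) := by
        rw [hs, hK_def, hexp, pow_add m, Nat.factorial_succ]
        ring

theorem card_le_of_forall_isHomogeneous {m : ℕ} (hv : Pairwise fun e f => ∀ i, v e i ≠ v f i)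
    (hm : ∀ S ⊆ F, IsHomogeneous v S → #S ≤ m) :
    #F ≤ 2 ^ k * k ! * m ^ (2 ^ (k + 1) - 1) := by
  simpa using card_le_of_forall_separatedAt (T := ∅) hv (by simp) hm

theorem two_pow_mul_factorial_le (k : ℕ) : 2 ^ k * k ! ≤ 2 ^ (2 ^ (k + 1) - 1) := by
  induction k with
  | zero => simp
  | succ k ih =>
    have hexp : 2 ^ (k + 2) - 1 = 2 ^ (k + 1) + (2 ^ (k + 1) - 1) := by
      have := Nat.one_le_two_pow (n := k + 1)
      lia
    have hbase : 2 * (k + 1) ≤ 2 ^ 2 ^ (k + 1) :=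
      calc 2 * (k + 1) ≤ 2 * 2 ^ k := by gcongr; exact k.lt_two_pow_self
        _ = 2 ^ (k + 1) := by ring
        _ ≤ 2 ^ 2 ^ (k + 1) := Nat.lt_two_pow_self.le
    calc 2 ^ (k + 1) * (k + 1)! = 2 * (k + 1) * (2 ^ k * k !) := by rw [Nat.factorial_succ]; ring
      _ ≤ 2 ^ 2 ^ (k + 1) * 2 ^ (2 ^ (k + 1) - 1) := by gcongr
      _ = 2 ^ (2 ^ (k + 2) - 1) := by rw [hexp, pow_add 2 (2 ^ (k + 1))]

theorem exists_isHomogeneous_of_pow_le {N : ℕ} (hv : Pairwise fun e f => ∀ i, v e i ≠ v f i)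
    (hN : (2 * N) ^ (2 ^ (k + 1) - 1) ≤ #F) : ∃ S ⊆ F, IsHomogeneous v S ∧ #S = N := by
  suffices ∃ S ⊆ F, IsHomogeneous v S ∧ N ≤ #S by
    obtain ⟨S, hSF, hS, hNS⟩ := this
    obtain ⟨S', hS', hcard⟩ := exists_subset_card_eq hNS
    exact ⟨S', hS'.trans hSF, hS.mono hS', hcard⟩
  by_contra! hlt
  have hN₀ : N ≠ 0 := fun h => by
    simpa [h] using hlt ∅ (empty_subset F) (isHomogeneous_of_card_le_one (by simp))
  have hexp : 2 ^ (k + 1) - 1 ≠ 0 := by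
    have := k.lt_two_pow_self
    lia
  have hbound := card_le_of_forall_isHomogeneous hv fun S hS h => Nat.le_sub_one_of_lt (hlt S hS h)
  refine hN.not_gt <| hbound.trans_lt ?_
  calc 2 ^ k * k ! * (N - 1) ^ (2 ^ (k + 1) - 1)
      ≤ 2 ^ (2 ^ (k + 1) - 1) * (N - 1) ^ (2 ^ (k + 1) - 1) := by
        gcongr
        exact two_pow_mul_factorial_le k
    _ < 2 ^ (2 ^ (k + 1) - 1) * N ^ (2 ^ (k + 1) - 1) := by
        gcongr
        lia
    _ = (2 * N) ^ (2 ^ (k + 1) - 1) := (mul_pow ..).symm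

end Tuples

section Patterns

variable {ι κ : Type*} [Fintype ι] [Fintype κ]

theorem patternOfPair_map_univ (u : ι ↪ ℤ) (w : κ ↪ ℤ) (r : ι ⊕ κ → ι ⊕ κ → Prop)
    [DecidableRel r] [IsTrans _ r] [Std.Antisymm r] [Std.Total r]
    (hr : ∀ a b, r a b ↔ Sum.elim u w a ≤ Sum.elim u w b) :
    patternOfPair (univ.map u) (univ.map w) = (univ.sort r).map Sum.isLeft := by
  have hinj : Function.Injective (Sum.elim u w) := fun a b hab =>
    antisymm_of r ((hr a b).2 hab.le) ((hr b a).2 hab.ge)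
  have hunion : univ.map u ∪ univ.map w = univ.map ⟨Sum.elim u w, hinj⟩ := by
    ext x
    simp
  have hleft (a : ι ⊕ κ) : decide (Sum.elim u w a ∈ univ.map u) = a.isLeft := by
    cases a with
    | inl i => simp
    | inr j => simpa using fun i hij => Sum.inl_ne_inr (hinj (a₁ := .inl i) (a₂ := .inr j) hij)
  rw [patternOfPair, hunion, ← map_sort _ _ r _ fun a _ b _ => hr a b, List.map_map]
  exact List.map_congr_left fun a _ => hleft a

theorem patternOfPair_congr [PartialOrder ι] [PartialOrder κ] {u u' : ι ↪o ℤ} {w w' : κ ↪o ℤ}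
    (huw : ∀ i j, u i ≠ w j) (huw' : ∀ i j, u' i ≠ w' j) (h : ∀ i j, u i < w j ↔ u' i < w' j) :
    patternOfPair (univ.map u.toEmbedding) (univ.map w.toEmbedding) =
      patternOfPair (univ.map u'.toEmbedding) (univ.map w'.toEmbedding) := by
  have hinj : Function.Injective (Sum.elim u w) := u.injective.sumElim w.injective huw
  let r := Sum.elim u w ⁻¹'o (· ≤ ·)
  have : Std.Antisymm r := ⟨fun a b hab hba => hinj (le_antisymm hab hba)⟩
  have hr (a b : ι ⊕ κ) : r a b ↔ Sum.elim u' w' a ≤ Sum.elim u' w' b := by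
    have hle (i : ι) (j : κ) : u i ≤ w j ↔ u' i ≤ w' j := by
      rw [(huw i j).le_iff_lt, (huw' i j).le_iff_lt, h]
    have hge (i : ι) (j : κ) : w j ≤ u i ↔ w' j ≤ u' i := by
      rw [← not_lt, h, not_lt]
    cases a <;> cases b <;> simp [r, Order.Preimage, hle, hge]
  rw [patternOfPair_map_univ u.toEmbedding w.toEmbedding r fun _ _ => Iff.rfl,
    patternOfPair_map_univ u'.toEmbedding w'.toEmbedding r hr]

theorem isPattern_patternOfPair {r : ℕ} {e f : Finset ℤ} {a : ℤ} (he : #e = r) (hf : #f = r)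
    (hdisj : Disjoint e f) (hae : a ∈ e) (ha : ∀ b ∈ e ∪ f, a ≤ b) :
    IsPattern r (patternOfPair e f) := by
  refine ⟨?_, ?_, ?_⟩
  · simp [patternOfPair, card_union_of_disjoint hdisj, he, hf, two_mul]
  · have hcount : (patternOfPair e f).count true = #{x ∈ e ∪ f | x ∈ e} := by
      rw [patternOfPair, List.count, List.countP_map, card_def, filter_val,
        ← Multiset.countP_eq_card_filter, ← sort_eq (e ∪ f) (· ≤ ·), Multiset.coe_countP]
      simp [Function.comp_def]
    rw [hcount, filter_mem_eq_inter, union_inter_cancel_left, he]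
  · have hmin : ∀ b ∈ (e ∪ f).erase a, a ≤ b := fun b hb => ha b (mem_of_mem_erase hb)
    rw [patternOfPair, ← insert_erase (mem_union_left f hae),
      sort_insert _ hmin (notMem_erase a _)]
    simp [hae]

theorem isPattern_patternOfPair_map_univ {k : ℕ} {u w : Fin (k + 1) ↪o ℤ}
    (huw : ∀ i j, u i ≠ w j) (h₀ : u 0 < w 0) :
    IsPattern (k + 1) (patternOfPair (univ.map u.toEmbedding) (univ.map w.toEmbedding)) := by
  refine isPattern_patternOfPair (a := u 0) (by simp) (by simp) ?_ (by simp) ?_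
  · simpa [disjoint_left] using fun i j => (huw i j).symm
  · simpa [or_imp, forall_and] using fun i => h₀.le.trans (w.monotone i.zero_le)

theorem isPattern_replicate {r : ℕ} (hr : r ≠ 0) :
    IsPattern r (List.replicate r true ++ List.replicate r false) := by
  refine ⟨?_, ?_, ?_⟩
  · simp [two_mul]
  · simp [List.count_replicate]
  · simp [List.head?_append, List.head?_replicate, hr]

theorem IsHomogeneous.exists_isPClique {α : Type*} {k : ℕ} {v : α → Fin (k + 1) ↪o ℤ}
    {S : Finset α} (hv : Pairwise fun e f => ∀ i j, v e i ≠ v f j) (hS : IsHomogeneous v S) :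
    ∃ P, IsPattern (k + 1) P ∧ IsPClique P (S.image fun e => univ.map (v e).toEmbedding) := by
  obtain ⟨M, hM⟩ := hS
  have hv' {e f : α} (h : v e 0 < v f 0) : ∀ i j, v e i ≠ v f j :=
    hv fun hef => h.ne (by rw [hef])
  have hclique (P : List Bool) (hP : ∀ e ∈ S, ∀ f ∈ S, v e 0 < v f 0 →
      patternOfPair (univ.map (v e).toEmbedding) (univ.map (v f).toEmbedding) = P) :
      IsPClique P (S.image fun e => univ.map (v e).toEmbedding) := by
    simp only [IsPClique, forall_mem_image]
    intro e he f hf hne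
    have hef : e ≠ f := fun h => hne (by rw [h])
    exact (hv hef 0 0).lt_or_gt.imp (hP e he f hf) (hP f hf e he)
  by_cases hlt : ∃ e ∈ S, ∃ f ∈ S, v e 0 < v f 0
  · obtain ⟨e, he, f, hf, hef⟩ := hlt
    refine ⟨_, isPattern_patternOfPair_map_univ (hv' hef) hef, hclique _ fun e' he' f' hf' hef' =>
      patternOfPair_congr (hv' hef') (hv' hef) fun i j => ?_⟩
    rw [hM e' he' f' hf' hef', hM e he f hf hef]
  · push Not at hlt
    exact ⟨_, isPattern_replicate k.succ_ne_zero, hclique _ fun e he f hf hef =>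
      absurd hef (hlt e he f hf).not_gt⟩

end Patterns

theorem two_mul_floor_rpow_inv_half_pow_le (n : ℕ) {d : ℕ} (hd : d ≠ 0) :
    (2 * ⌊(n : ℝ) ^ (d : ℝ)⁻¹ / 2⌋₊) ^ d ≤ n := by
  have hfloor : 2 * (⌊(n : ℝ) ^ (d : ℝ)⁻¹ / 2⌋₊ : ℝ) ≤ (n : ℝ) ^ (d : ℝ)⁻¹ := by
    linarith [Nat.floor_le (by positivity : 0 ≤ (n : ℝ) ^ (d : ℝ)⁻¹ / 2)]
  have hpow : (2 * (⌊(n : ℝ) ^ (d : ℝ)⁻¹ / 2⌋₊ : ℝ)) ^ d ≤ n :=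
    calc _ ≤ ((n : ℝ) ^ (d : ℝ)⁻¹) ^ d := by gcongr
      _ = n := Real.rpow_inv_natCast_pow n.cast_nonneg hd
  exact_mod_cast hpow

/-- **Sharp Ramsey theorem for ordered matchings.** Any collection of `n ≥ 2` pairwise disjoint
`r`-element subsets of `ℤ` (`r ≥ 2`) contains a sub-collection of size
`⌊n^(1/(2^r - 1)) / 2⌋` in which every pair of sets realizes the same `r`-pattern. -/
theorem ordered_matching_ramsey (r n : ℕ) (hr : 2 ≤ r) (hn : 2 ≤ n)
    (H : Finset (Finset ℤ)) (hn' : H.card = n)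
    (hcard : ∀ e ∈ H, e.card = r)
    (hdisj : ∀ e ∈ H, ∀ f ∈ H, e ≠ f → Disjoint e f) :
    ∃ P : List Bool, IsPattern r P ∧ ∃ S ⊆ H, IsPClique P S ∧
      S.card = ⌊((n : ℝ) ^ ((1 : ℝ) / (2 ^ r - 1)) / 2)⌋₊ := by
  obtain ⟨k, rfl⟩ : ∃ k, r = k + 1 := Nat.exists_eq_succ_of_ne_zero (by lia)
  let v (e : H) : Fin (k + 1) ↪o ℤ := e.1.orderEmbOfFin (hcard e e.2)
  have hrange (e : H) : univ.map (v e).toEmbedding = e := map_orderEmbOfFin_univ _ _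
  have hv : Pairwise fun e f => ∀ i j, v e i ≠ v f j := fun e f hef i j =>
    disjoint_iff_ne.1 (hdisj e e.2 f f.2 (Subtype.coe_injective.ne hef))
      _ (orderEmbOfFin_mem ..) _ (orderEmbOfFin_mem ..)
  have hexp : ((2 ^ (k + 1) - 1 : ℕ) : ℝ) = 2 ^ (k + 1) - 1 := by
    simp [Nat.cast_sub Nat.one_le_two_pow]
  have hfloor := two_mul_floor_rpow_inv_half_pow_le n (Nat.sub_ne_zero_of_lt
    (Nat.one_lt_two_pow k.succ_ne_zero))
  obtain ⟨S, -, hS, hScard⟩ := exists_isHomogeneous_of_pow_le (v := v) (F := univ)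
    (fun e f hef i => hv hef i i) (hfloor.trans_eq (by simp [hn']))
  obtain ⟨P, hP, hclique⟩ := hS.exists_isPClique hv
  simp only [hrange] at hclique
  refine ⟨P, hP, _, image_subset_iff.2 fun e _ => e.2, hclique, ?_⟩
  rw [card_image_of_injective S Subtype.coe_injective, hScard, hexp, one_div]
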